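/- Let U ⊆ ℝⁿ (or ℂⁿ) be open, let f_1, …, f_k : U → ℝ be twice continuously differentiable and A_1, …, A_n : U → ℝ continuously differentiable, and suppose that Δ := det((∂f_ℓ/∂x_m)_{1≤ℓ,m≤k}) is nonvanishing on U. For i = k+1, …, n let m_i be the determinant of the (k+1)×(k+1) matrix whose first k rows are (∂f_ℓ/∂x_1, …, ∂f_ℓ/∂x_k, ∂f_ℓ/∂x_i), ℓ = 1, …, k, and whose last row is (A_1, …, A_k, A_i). For j = k+1, …, n define the derivation D_j g := ∂g/∂x_j + Σ_{ℓ=1}^{k} (−1)^{k+ℓ+1} (1/Δ) · J_{ℓ,j} · ∂g/∂x_ℓ, where J_{ℓ,j} is the Jacobian determinant of (f_1, …, f_k) with respect to (x_1, …, x_{ℓ−1}, x_{ℓ+1}, …, x_k, x_j). Then the Hessian h := det((D_j(m_i/Δ))_{i,j=k+1,…,n}) satisfies h = Δ^{−(2+(n−k))} · det of the (n+1)×(n+1) matrix whose first row is (Δ, ∂Δ/∂x_1, …, ∂Δ/∂x_n), whose next k rows are (0, ∂f_ℓ/∂x_1, …, ∂f_ℓ/∂x_n) for ℓ = 1, …,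 k, and whose last n−k rows are (m_i, ∂m_i/∂x_1, …, ∂m_i/∂x_n) for i = k+1, …, n. -/

import Mathlib

/-!
Fix `x ∈ U` and put `g_i = m_i / Δ`. Subtracting `m_i / Δ` times the first row of the large matrix
from the row of `m_i` turns it into `(0, Δ ∂g_i)`, by the quotient rule. Hence the large determinant
is `Δ · Δ^(n-k)` times the determinant of the `n × n` block matrix with rows `∂f_ℓ` and `∂g_i`.
Write `F₁, F₂, G₁, G₂` for its blocks with respect to the splitting `k + (n - k)` of rows and
columns; then `det F₁ = Δ`, and the Schur complement gives `Δ · det (G₂ - G₁ F₁⁻¹ F₂)`. Finally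
`G₂ - G₁ F₁⁻¹ F₂` is the matrix `(D_j g_i)`: by Cramer's rule the entries of `F₁⁻¹ F₂` are the
quotients by `Δ` of the determinants of `F₁` with one column replaced, and moving the replaced column
to the last position (`det_moveCol`) identifies these with `± J_{ℓ,j} / Δ`.
-/

/-- The partial derivative `∂g/∂x_m` of a function `g` on `ℝⁿ`. -/
noncomputable def pd {n : ℕ} (g : (Fin n → ℝ) → ℝ) (m : Fin n) (x : Fin n → ℝ) : ℝ :=
  fderiv ℝ g x (Pi.single m 1)

open Matrix in
/-- Replacing column `ℓ` of `F` by `b` and then moving it to the last place changes the determinant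
by the sign of a cycle. The exponent is `k + ℓ + 1`, which has the parity of `k - 1 - ℓ`. -/
lemma det_moveCol {k : ℕ} (F : Matrix (Fin k) (Fin k) ℝ) (b : Fin k → ℝ) (ℓ : Fin k) :
    (Matrix.of fun (r c : Fin k) => if (c : ℕ) < (ℓ : ℕ) then F r c
      else if h2 : (c : ℕ) + 1 < k then F r ⟨(c : ℕ) + 1, h2⟩ else b r).det
      = (-1) ^ (k + (ℓ : ℕ) + 1) * F.cramer b ℓ := by
  obtain _ | k := k
  · exact ℓ.elim0
  -- Expanding along the last, resp. the `ℓ`-th, column produces the same minors.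
  rw [Matrix.cramer_apply, Matrix.det_succ_column _ (Fin.last k), Matrix.det_succ_column _ ℓ,
    Finset.mul_sum]
  refine Finset.sum_congr rfl fun i _ => ?_
  have hsub : (Matrix.of fun (r c : Fin (k + 1)) => if (c : ℕ) < (ℓ : ℕ) then F r c
      else if h2 : (c : ℕ) + 1 < k + 1 then F r ⟨(c : ℕ) + 1, h2⟩ else b r).submatrix
        i.succAbove (Fin.last k).succAbove
      = (F.updateCol ℓ b).submatrix i.succAbove ℓ.succAbove := by
    ext r c
    simp only [submatrix_apply, of_apply, Fin.succAbove_last, updateCol_apply,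
      Fin.succAbove_ne, if_false, Fin.val_castSucc]
    by_cases hc : (c : ℕ) < ℓ
    · rw [if_pos hc, Fin.succAbove_of_castSucc_lt ℓ c (by simpa [Fin.lt_def] using hc)]
    · rw [if_neg hc, dif_pos (by have := c.isLt; omega),
        Fin.succAbove_of_le_castSucc ℓ c (by simpa [Fin.le_def] using hc)]
      rfl
  rw [hsub]
  have hl : ¬ k < (ℓ : ℕ) := by have := ℓ.isLt; omega
  have hs : (-1 : ℝ) ^ (k + 1 + (ℓ : ℕ) + 1) * (-1) ^ ((i : ℕ) + ℓ) = (-1) ^ ((i : ℕ) + k) := by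
    rw [← pow_add, show k + 1 + (ℓ : ℕ) + 1 + (i + ℓ) = (i + k) + 2 * (ℓ + 1) by ring, pow_add,
      pow_mul]
    simp
  simp only [of_apply, Fin.val_last, hl, if_false, lt_irrefl, dif_neg, not_false_eq_true,
    updateCol_self]
  rw [← mul_assoc, ← mul_assoc, hs]

open Matrix in
/-- The matrix identity behind the theorem: `d` is the gradient of `Δ`, `p` is the column of the
`m_i`, and `M₁, M₂` are the blocks of their gradients. The right-hand Schur complement is formed
with the blocks `G_i = (δ M_i - p d_i) / δ²` prescribed by the quotient rule. -/
lemma det_bordered {a b : Type*} [Fintype a] [DecidableEq a] [Fintype b] [DecidableEq b]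
    (δ : ℝ) (hδ : δ ≠ 0) (d₁ : a → ℝ) (d₂ : b → ℝ) (F₁ : Matrix a a ℝ) (F₂ : Matrix a b ℝ)
    (hF : F₁.det = δ) (p : b → ℝ) (M₁ G₁ : Matrix b a ℝ) (M₂ G₂ : Matrix b b ℝ)
    (h₁ : ∀ s t, G₁ s t = (M₁ s t * δ - p s * d₁ t) / δ ^ 2)
    (h₂ : ∀ s t, G₂ s t = (M₂ s t * δ - p s * d₂ t) / δ ^ 2) :
    (fromBlocks (of fun (_ _ : Unit) => δ) (of fun (_ : Unit) c => Sum.elim d₁ d₂ c)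
      (of fun r (_ : Unit) => Sum.elim (fun _ => 0) p r) (fromBlocks F₁ F₂ M₁ M₂)).det
      = δ ^ (2 + Fintype.card b) * (G₂ - G₁ * F₁⁻¹ * F₂).det := by
  have hF₁ : IsUnit F₁.det := by rw [hF]; exact hδ.isUnit
  let : Invertible F₁ := invertibleOfIsUnitDet F₁ hF₁
  have hinv : (of fun (_ _ : Unit) => δ) * (of fun (_ _ : Unit) => δ⁻¹) = 1 := by
    ext; simp [mul_apply, hδ]
  let : Invertible (of fun (_ _ : Unit) => δ) := invertibleOfRightInverse _ _ hinv
  rw [det_fromBlocks₁₁, invOf_eq_right_inv hinv]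
  have hS : fromBlocks F₁ F₂ M₁ M₂ - (of fun r (_ : Unit) => Sum.elim (fun _ => 0) p r) *
      (of fun (_ _ : Unit) => δ⁻¹) * (of fun (_ : Unit) c => Sum.elim d₁ d₂ c)
      = fromBlocks F₁ F₂ (δ • G₁) (δ • G₂) := by
    ext r c
    rcases r with r | r <;> rcases c with c | c <;> simp [mul_apply, h₁, h₂] <;> field_simp
  rw [hS, det_fromBlocks₁₁, invOf_eq_nonsing_inv, smul_mul, smul_mul, ← smul_sub, det_smul, hF]
  simp only [det_unique, of_apply]
  ring

/-- The determinant of a matrix of differentiable functions is differentiable. -/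
lemma differentiableAt_det {E : Type*} [NormedAddCommGroup E] [NormedSpace ℝ E] {k : ℕ}
    (M : E → Matrix (Fin k) (Fin k) ℝ) (x : E)
    (hM : ∀ r c, DifferentiableAt ℝ (fun y => M y r c) x) :
    DifferentiableAt ℝ (fun y => (M y).det) x := by
  simp only [Matrix.det_apply]
  refine DifferentiableAt.fun_sum fun σ _ => DifferentiableAt.const_smul ?_ _
  exact (HasFDerivAt.finsetProd fun i _ => (hM (σ i) i).hasFDerivAt).differentiableAt

lemma differentiableAt_pd {n : ℕ} {g : (Fin n → ℝ) → ℝ} {x : Fin n → ℝ}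
    (hg : ContDiffAt ℝ 2 g x) (c : Fin n) : DifferentiableAt ℝ (pd g c) x := by
  have h1 : ContDiffAt ℝ 1 (fderiv ℝ g) x := hg.fderiv_right (by norm_num)
  exact (h1.differentiableAt (by norm_num)).clm_apply (differentiableAt_const _)

lemma pd_div {n : ℕ} {u v : (Fin n → ℝ) → ℝ} {x : Fin n → ℝ} (hu : DifferentiableAt ℝ u x)
    (hv : DifferentiableAt ℝ v x) (hx : v x ≠ 0) (c : Fin n) :
    pd (fun y => u y / v y) c x = (pd u c x * v x - u x * pd v c x) / v x ^ 2 := by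
  have hd := hu.hasFDerivAt.mul ((hasDerivAt_inv hx).comp_hasFDerivAt x hv.hasFDerivAt)
  have he : (fun y => u y / v y) = u * (Inv.inv ∘ v) := by
    ext y
    simp [div_eq_mul_inv]
  unfold pd
  rw [he, hd.fderiv]
  simp
  field_simp
  ring

/-- **Formula for the Hessian of the restriction of a 1-form to a level set.**
Let `U ⊆ ℝⁿ` be open, `f_1, …, f_k` be `C²` on `U`, `A_1, …, A_n` be `C¹` on `U`,
with the leading Jacobian minor `Δ` nonvanishing on `U`.  With `m_i` the
`(k+1) × (k+1)` minors of the augmented Jacobian, `J_{ℓ,j}` the Jacobian of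
`(f_1,…,f_k)` in the variables `(x_1,…,x_{ℓ-1},x_{ℓ+1},…,x_k,x_j)`, and
`D_j g = ∂g/∂x_j + Σ_ℓ (-1)^(k+ℓ+1) Δ⁻¹ J_{ℓ,j} ∂g/∂x_ℓ` the derivations along
the level sets, the Hessian `h = det (D_j(m_i/Δ))_{i,j=k+1,…,n}` satisfies
`h = Δ^{-(2+(n-k))}` times the determinant of the `(n+1) × (n+1)` matrix whose
first row is `(Δ, ∂Δ/∂x_1, …, ∂Δ/∂x_n)`, whose next `k` rows are
`(0, ∂f_ℓ/∂x_1, …, ∂f_ℓ/∂x_n)` and whose last `n-k` rows are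
`(m_i, ∂m_i/∂x_1, …, ∂m_i/∂x_n)` for `i = k+1, …, n`. -/
theorem hessian_of_restricted_oneForm
    {n k : ℕ} (hkn : k ≤ n)
    (U : Set (Fin n → ℝ)) (hU : IsOpen U)
    (f : Fin k → (Fin n → ℝ) → ℝ) (A : Fin n → (Fin n → ℝ) → ℝ)
    (hf : ∀ ℓ, ContDiffOn ℝ 2 (f ℓ) U)
    (hA : ∀ i, ContDiffOn ℝ 1 (A i) U)
    (Δ : (Fin n → ℝ) → ℝ)
    (hΔdef : Δ = fun x =>
      (Matrix.of fun (ℓ m : Fin k) => pd (f ℓ) (Fin.castLE hkn m) x).det)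
    (hΔ : ∀ x ∈ U, Δ x ≠ 0)
    (m_ : Fin n → (Fin n → ℝ) → ℝ)
    (hm : ∀ i : Fin n, m_ i = fun x =>
      (Matrix.of fun (r c : Fin (k + 1)) =>
        (fun col : Fin n =>
          if hr : (r : ℕ) < k then pd (f ⟨(r : ℕ), hr⟩) col x else A col x)
        (if hc : (c : ℕ) < k then Fin.castLE hkn ⟨(c : ℕ), hc⟩ else i)).det)
    (J : Fin k → Fin n → (Fin n → ℝ) → ℝ)
    (hJ : ∀ (ℓ : Fin k) (j : Fin n), J ℓ j = fun x =>
      (Matrix.of fun (r c : Fin k) =>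
        pd (f r)
          (if (c : ℕ) < (ℓ : ℕ) then Fin.castLE hkn c
           else if h2 : (c : ℕ) + 1 < k then Fin.castLE hkn ⟨(c : ℕ) + 1, h2⟩
           else j) x).det)
    (D : Fin n → ((Fin n → ℝ) → ℝ) → (Fin n → ℝ) → ℝ)
    (hD : ∀ (j : Fin n) (g : (Fin n → ℝ) → ℝ) (x : Fin n → ℝ),
      D j g x = pd g j x +
        ∑ ℓ : Fin k, (-1 : ℝ) ^ (k + ((ℓ : ℕ) + 1) + 1) * (Δ x)⁻¹ * J ℓ j x *
          pd g (Fin.castLE hkn ℓ) x)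
    (h : (Fin n → ℝ) → ℝ)
    (hh : h = fun x =>
      (Matrix.of fun (s t : Fin (n - k)) =>
        D ⟨k + (t : ℕ), by have := t.isLt; omega⟩
          (fun y => m_ ⟨k + (s : ℕ), by have := s.isLt; omega⟩ y / Δ y) x).det) :
    ∀ x ∈ U,
      h x = (Δ x) ^ (-(2 + ((n : ℤ) - (k : ℤ)))) *
        (Matrix.of fun (r c : Fin (n + 1)) =>
          if hr0 : (r : ℕ) = 0 then
            (if hc0 : (c : ℕ) = 0 then Δ x
             else pd Δ ⟨(c : ℕ) - 1, by have := c.isLt; omega⟩ x)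
          else if hrk : (r : ℕ) ≤ k then
            (if hc0 : (c : ℕ) = 0 then 0
             else pd (f ⟨(r : ℕ) - 1, by omega⟩)
               ⟨(c : ℕ) - 1, by have := c.isLt; omega⟩ x)
          else
            (if hc0 : (c : ℕ) = 0 then m_ ⟨(r : ℕ) - 1, by have := r.isLt; omega⟩ x
             else pd (m_ ⟨(r : ℕ) - 1, by have := r.isLt; omega⟩)
               ⟨(c : ℕ) - 1, by have := c.isLt; omega⟩ x)).det := by
  intro x hx
  have hf' : ∀ ℓ, ContDiffAt ℝ 2 (f ℓ) x := fun ℓ => (hf ℓ).contDiffAt (hU.mem_nhds hx)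
  have hA' : ∀ i, DifferentiableAt ℝ (A i) x := fun i =>
    ((hA i).contDiffAt (hU.mem_nhds hx)).differentiableAt (by norm_num)
  have hΔx := hΔ x hx
  have hΔd : DifferentiableAt ℝ Δ x := by
    rw [hΔdef]
    exact differentiableAt_det _ _ fun r c => differentiableAt_pd (hf' r) _
  have hmd : ∀ i, DifferentiableAt ℝ (m_ i) x := by
    intro i
    rw [hm]
    refine differentiableAt_det _ _ fun r c => ?_
    simp only [Matrix.of_apply]
    by_cases hr : (r : ℕ) < k
    · simp only [hr, dif_pos]
      exact differentiableAt_pd (hf' _) _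
    · simp only [hr, dif_neg, not_false_eq_true]
      exact hA' _
  let lo : Fin k → Fin n := Fin.castLE hkn
  let hi : Fin (n - k) → Fin n := fun s => ⟨k + (s : ℕ), by have := s.isLt; omega⟩
  let F₁ : Matrix (Fin k) (Fin k) ℝ := .of fun r c => pd (f r) (lo c) x
  let F₂ : Matrix (Fin k) (Fin (n - k)) ℝ := .of fun r c => pd (f r) (hi c) x
  let M₁ : Matrix (Fin (n - k)) (Fin k) ℝ := .of fun r c => pd (m_ (hi r)) (lo c) x
  let M₂ : Matrix (Fin (n - k)) (Fin (n - k)) ℝ := .of fun r c => pd (m_ (hi r)) (hi c) x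
  let G₁ : Matrix (Fin (n - k)) (Fin k) ℝ :=
    .of fun r c => pd (fun y => m_ (hi r) y / Δ y) (lo c) x
  let G₂ : Matrix (Fin (n - k)) (Fin (n - k)) ℝ :=
    .of fun r c => pd (fun y => m_ (hi r) y / Δ y) (hi c) x
  have hF : F₁.det = Δ x := by rw [hΔdef]
  have key := det_bordered (Δ x) hΔx (fun c => pd Δ (lo c) x) (fun c => pd Δ (hi c) x) F₁ F₂ hF
    (fun s => m_ (hi s) x) M₁ G₁ M₂ G₂
    (fun s t => pd_div (hmd _) hΔd hΔx _) (fun s t => pd_div (hmd _) hΔd hΔx _)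
  have hh' : h x = (G₂ - G₁ * F₁⁻¹ * F₂).det := by
    rw [hh]
    refine congrArg Matrix.det ?_
    ext s t
    rw [Matrix.of_apply, hD, Matrix.sub_apply, sub_eq_add_neg, Matrix.mul_assoc,
      Matrix.mul_apply, ← Finset.sum_neg_distrib]
    refine congrArg₂ (· + ·) rfl (Finset.sum_congr rfl fun ℓ _ => ?_)
    have hJx : J ℓ (hi t) x = (-1) ^ (k + (ℓ : ℕ) + 1) * F₁.cramer (fun r => F₂ r t) ℓ := by
      rw [← det_moveCol, hJ]
      refine congrArg Matrix.det ?_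
      ext r c
      simp only [Matrix.of_apply, F₁, F₂, lo]
      split_ifs <;> rfl
    have hC : (F₁⁻¹ * F₂) ℓ t = (Δ x)⁻¹ * F₁.cramer (fun r => F₂ r t) ℓ := by
      rw [Matrix.inv_def, hF, Ring.inverse_eq_inv', Matrix.smul_mul, Matrix.smul_apply,
        smul_eq_mul, Matrix.cramer_eq_adjugate_mulVec]
      rfl
    have hs : (-1 : ℝ) ^ (k + ((ℓ : ℕ) + 1) + 1) * (-1) ^ (k + (ℓ : ℕ) + 1) = -1 := by
      rw [← pow_add, show k + ((ℓ : ℕ) + 1) + 1 + (k + ℓ + 1) = 2 * (k + ℓ + 1) + 1 by ring]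
      simp [pow_succ, pow_mul]
    change _ * _ * J ℓ (hi t) x * G₁ s ℓ = _
    rw [hJx, hC]
    linear_combination (Δ x)⁻¹ * F₁.cramer (fun r => F₂ r t) ℓ * G₁ s ℓ * hs
  let e₀ : Fin k ⊕ Fin (n - k) ≃ Fin n := finSumFinEquiv.trans (finCongr (by omega))
  let e : Unit ⊕ (Fin k ⊕ Fin (n - k)) ≃ Fin (n + 1) :=
    (Equiv.sumCongr (Equiv.equivPUnit (Fin 1)).symm e₀).trans
      (finSumFinEquiv.trans (finCongr (by omega)))
  have e0 : ∀ u, ((e (.inl u) : Fin (n + 1)) : ℕ) = 0 := fun u => by simp [e]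
  have e1 : ∀ c, ((e (.inr (.inl c)) : Fin (n + 1)) : ℕ) = c + 1 := fun c => by
    simp [e, e₀]
  have e2 : ∀ c, ((e (.inr (.inr c)) : Fin (n + 1)) : ℕ) = k + c + 1 := fun c => by
    simp [e, e₀]
  rw [← Matrix.det_submatrix_equiv_self e]
  rw [hh']
  have hpow : (Δ x) ^ (-(2 + ((n : ℤ) - (k : ℤ)))) * (Δ x) ^ (2 + Fintype.card (Fin (n - k)))
      = 1 := by
    rw [Fintype.card_fin, ← zpow_natCast, ← zpow_add₀ hΔx]
    have : -(2 + ((n : ℤ) - (k : ℤ))) + ((2 + (n - k) : ℕ) : ℤ) = 0 := by omega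
    rw [this, zpow_zero]
  rw [← one_mul (Matrix.det (G₂ - _)), ← hpow, mul_assoc, ← key]
  congr 2
  ext r c
  have hk1 : ∀ s : Fin k, (s : ℕ) + 1 ≤ k := fun s => s.isLt
  have hk2 : ∀ s : Fin (n - k), ¬ (k + (s : ℕ) + 1 ≤ k) := fun s => by omega
  rcases r with r | r | r <;> rcases c with c | c | c <;>
    simp [-Fin.val_eq_zero_iff, e0, e1, e2, hk1, hk2, F₁, F₂, M₁, M₂, lo, hi] <;> rfl
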